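/- Fix integers 1 ≤ k ≤ n and 1 ≤ j ≤ k, and let I_j = { s ∈ [n] : s ≡ j (mod k) }, with m = |I_j|. Then the number of tuples γ ∈ I_j^m such that, under the k-vacillating parking rule on a street with spots 1,…,n, all m cars with preferences γ park and every car parks in a spot belonging to I_j, equals |VPF_m|, the number of 1-vacillating parking functions of length m. -/

import Mathlib

/-!
Listing the spots of `I_j` in increasing order as spot `1, 2, …, m` turns a move by `k` spots of
the street into a move by one position in the list, and a move leaves the street exactly when it
leaves the list. So this relabelling carries the `1`-vacillating rule on `m` spots to the
`k`-vacillating rule on `I_j`; in particular cars preferring spots of `I_j` never leave `I_j`, and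
relabelling the entries of a preference list is the required bijection. In the same way, the spots
congruent to `j` modulo `d` carry the `k`-vacillating rule to the `k * d`-vacillating rule.
-/

/-- One car with (1-indexed) preference `p` attempts to park on a one-way street with
spots `1,…,n` under the `k`-vacillating rule, given the set `occ` of occupied spots:
it parks in spot `p` if unoccupied; otherwise in spot `p - k` if `p - k ≥ 1` and it is
unoccupied; otherwise in spot `p + k` if `p + k ≤ n` and it is unoccupied; otherwise it
fails to park (`none`). -/
def parkStep (n k : ℕ) (occ : Finset ℕ) (p : ℕ) : Option ℕ :=
  if p ∉ occ then some p
  else if k < p ∧ p - k ∉ occ then some (p - k)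
  else if p + k ≤ n ∧ p + k ∉ occ then some (p + k)
  else none

/-- Park the cars whose preference list is given, in order, under the `k`-vacillating
rule on a street with spots `1,…,n`, starting from occupied set `occ`.  Returns the list
of spots occupied by the cars (in the order the cars arrive), or `none` if some car
fails to park. -/
def parkAssign (n k : ℕ) (occ : Finset ℕ) : List ℕ → Option (List ℕ)
  | [] => some []
  | p :: ps =>
    match parkStep n k occ p with
    | none => none
    | some s => (parkAssign n k (insert s occ) ps).map (s :: ·)

/-- The 1-indexed preference list in `[n]^m` associated to `α : Fin m → Fin n`
(car `i+1` prefers spot `α i + 1`). -/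
def prefList {m n : ℕ} (α : Fin m → Fin n) : List ℕ :=
  List.ofFn fun i => (α i : ℕ) + 1

/-- The set of `k`-vacillating parking functions of length `n`:
preference lists in `[n]^n` (encoded as `Fin n → Fin n`) for which all `n` cars park. -/
def VPFk (n k : ℕ) : Finset (Fin n → Fin n) :=
  Finset.univ.filter fun α => (parkAssign n k ∅ (prefList α)).isSome

/-- The set of vacillating parking functions of length `n` (the case `k = 1`). -/
def VPF (n : ℕ) : Finset (Fin n → Fin n) := VPFk n 1

/-- `I_j = { s ∈ [n] : s ≡ j (mod k) }`. -/
def Ij (n k j : ℕ) : Finset ℕ :=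
  (Finset.Icc 1 n).filter fun s => s % k = j % k

theorem mem_Icc_of_parkStep_eq_some {n k p s : ℕ} {occ : Finset ℕ} (hp : p ∈ Finset.Icc 1 n)
    (h : parkStep n k occ p = some s) : s ∈ Finset.Icc 1 n := by
  rw [Finset.mem_Icc] at *
  unfold parkStep at h
  split_ifs at h <;> simp only [Option.some.injEq] at h <;> omega

theorem forall_mem_Icc_of_parkAssign_eq_some {n k : ℕ} {l r : List ℕ} {occ : Finset ℕ}
    (hl : ∀ p ∈ l, p ∈ Finset.Icc 1 n) (h : parkAssign n k occ l = some r) :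
    ∀ s ∈ r, s ∈ Finset.Icc 1 n := by
  induction l generalizing occ r with
  | nil =>
    obtain rfl : [] = r := Option.some.inj h
    exact List.forall_mem_nil _
  | cons p ps ih =>
    rw [List.forall_mem_cons] at hl
    rw [parkAssign] at h
    split at h
    · contradiction
    · next s hs =>
      obtain ⟨t, ht, rfl⟩ := Option.map_eq_some_iff.1 h
      exact List.forall_mem_cons.2 ⟨mem_Icc_of_parkStep_eq_some hl.1 hs, ih hl.2 ht⟩

theorem forall_mem_prefList_mem_Icc {r n : ℕ} (α : Fin r → Fin n) :
    ∀ p ∈ prefList α, p ∈ Finset.Icc 1 n :=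
  List.forall_mem_ofFn_iff.2 fun i => Finset.mem_Icc.2 ⟨Nat.le_add_left 1 _, (α i).isLt⟩

/-- `f` relabels the spots `1, …, m` of a street as spots of the street `1, …, n` so that moves by
`k` spots become moves by `l` spots. The non-spot `0` stands for having left the street at its
start; with truncated subtraction, `map_sub` thus also says that a backward move leaves one street
exactly when it leaves the other. -/
structure IsStreetEmbedding (f : ℕ → ℕ) (m k n l : ℕ) : Prop where
  strictMono : StrictMono f
  map_zero : f 0 = 0
  map_sub (p : ℕ) : f (p - k) = f p - l
  le_iff (p : ℕ) : f p ≤ n ↔ p ≤ m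

namespace IsStreetEmbedding

variable {f : ℕ → ℕ} {m k n l : ℕ}

theorem pos_iff (hf : IsStreetEmbedding f m k n l) {p : ℕ} : 0 < f p ↔ 0 < p := by
  simpa only [hf.map_zero] using hf.strictMono.lt_iff_lt (a := 0) (b := p)

theorem lt_iff (hf : IsStreetEmbedding f m k n l) {p : ℕ} : l < f p ↔ k < p := by
  rw [← Nat.sub_pos_iff_lt, ← hf.map_sub, hf.pos_iff, Nat.sub_pos_iff_lt]

theorem map_add (hf : IsStreetEmbedding f m k n l) {p : ℕ} (hp : 0 < p) :
    f (p + k) = f p + l := by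
  have hlt : l < f (p + k) := hf.lt_iff.2 (Nat.lt_add_of_pos_left hp)
  have hsub : f p = f (p + k) - l := by rw [← hf.map_sub, Nat.add_sub_cancel]
  rw [hsub, Nat.sub_add_cancel hlt.le]

theorem mem_Icc_iff (hf : IsStreetEmbedding f m k n l) {p : ℕ} :
    f p ∈ Finset.Icc 1 n ↔ p ∈ Finset.Icc 1 m := by
  rw [Finset.mem_Icc, Finset.mem_Icc]
  exact and_congr hf.pos_iff (hf.le_iff p)

theorem parkStep_map (hf : IsStreetEmbedding f m k n l) (occ : Finset ℕ) {p : ℕ} (hp : 0 < p) :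
    parkStep n l (occ.image f) (f p) = (parkStep m k occ p).map f := by
  simp only [parkStep, hf.lt_iff, ← hf.map_sub, ← hf.map_add hp, hf.le_iff,
    hf.strictMono.injective.mem_finset_image]
  split_ifs <;> rfl

theorem parkAssign_map (hf : IsStreetEmbedding f m k n l) (occ : Finset ℕ) {ps : List ℕ}
    (hps : ∀ p ∈ ps, 0 < p) :
    parkAssign n l (occ.image f) (ps.map f) = (parkAssign m k occ ps).map (List.map f) := by
  induction ps generalizing occ with
  | nil => rfl
  | cons p ps ih =>
    rw [List.forall_mem_cons] at hps
    rw [List.map_cons, parkAssign, parkAssign, hf.parkStep_map occ hps.1]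
    cases parkStep m k occ p with
    | none => rfl
    | some s =>
      simp only [Option.map_some, ← Finset.image_insert, ih _ hps.2, Option.map_map]
      rfl

/-- The relabelling `f` as a map of `0`-indexed spots, the encoding used by `prefList`. -/
def finMap (hf : IsStreetEmbedding f m k n l) (a : Fin m) : Fin n :=
  ⟨f (a + 1) - 1, Nat.sub_one_lt_of_le (hf.pos_iff.2 a.val.succ_pos) ((hf.le_iff _).2 a.isLt)⟩

theorem finMap_add_one (hf : IsStreetEmbedding f m k n l) (a : Fin m) :
    (hf.finMap a : ℕ) + 1 = f (a + 1) :=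
  Nat.sub_add_cancel (hf.pos_iff.2 a.val.succ_pos)

theorem finMap_injective (hf : IsStreetEmbedding f m k n l) : Function.Injective hf.finMap := by
  intro a b hab
  have h : f (a + 1) = f (b + 1) := by rw [← hf.finMap_add_one, ← hf.finMap_add_one, hab]
  exact Fin.ext (Nat.succ_injective (hf.strictMono.injective h))

theorem mem_range_finMap (hf : IsStreetEmbedding f m k n l) {b : Fin n} :
    b ∈ Set.range hf.finMap ↔ (b : ℕ) + 1 ∈ (Finset.Icc 1 m).image f := by
  rw [Finset.mem_image]
  constructor
  · rintro ⟨a, rfl⟩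
    exact ⟨a + 1, Finset.mem_Icc.2 ⟨Nat.le_add_left 1 _, a.isLt⟩, (hf.finMap_add_one a).symm⟩
  · rintro ⟨p, hp, hpb⟩
    obtain ⟨hp1, hpm⟩ := Finset.mem_Icc.1 hp
    obtain ⟨q, rfl⟩ := Nat.exists_eq_add_of_le' hp1
    exact ⟨⟨q, hpm⟩, Fin.ext (Nat.succ_injective ((hf.finMap_add_one _).trans hpb))⟩

theorem prefList_finMap_comp (hf : IsStreetEmbedding f m k n l) {r : ℕ} (α : Fin r → Fin m) :
    prefList (hf.finMap ∘ α) = (prefList α).map f := by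
  simp only [prefList, List.map_ofFn, Function.comp_def, hf.finMap_add_one]

theorem parkAssign_prefList_finMap_comp (hf : IsStreetEmbedding f m k n l) {r : ℕ}
    (α : Fin r → Fin m) :
    parkAssign n l ∅ (prefList (hf.finMap ∘ α)) =
      (parkAssign m k ∅ (prefList α)).map (List.map f) := by
  rw [hf.prefList_finMap_comp, ← hf.parkAssign_map, Finset.image_empty]
  exact fun p hp => (Finset.mem_Icc.1 (forall_mem_prefList_mem_Icc α p hp)).1

theorem forall_mem_parkAssign_finMap_comp (hf : IsStreetEmbedding f m k n l) {r : ℕ}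
    (α : Fin r → Fin m) :
    ∀ s ∈ (parkAssign n l ∅ (prefList (hf.finMap ∘ α))).getD [],
      s ∈ (Finset.Icc 1 m).image f := by
  rw [hf.parkAssign_prefList_finMap_comp]
  cases hα : parkAssign m k ∅ (prefList α) with
  | none => exact List.forall_mem_nil _
  | some t =>
    have ht := forall_mem_Icc_of_parkAssign_eq_some (forall_mem_prefList_mem_Icc α) hα
    exact List.forall_mem_map.2 fun s hs => Finset.mem_image_of_mem f (ht s hs)

theorem filter_park_eq_image (hf : IsStreetEmbedding f m k n l) (r : ℕ) :
    (Finset.univ.filter fun γ : Fin r → Fin n =>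
        (∀ i, (γ i : ℕ) + 1 ∈ (Finset.Icc 1 m).image f) ∧
          (parkAssign n l ∅ (prefList γ)).isSome ∧
          ∀ s ∈ (parkAssign n l ∅ (prefList γ)).getD [], s ∈ (Finset.Icc 1 m).image f) =
      (Finset.univ.filter fun α : Fin r → Fin m =>
        (parkAssign m k ∅ (prefList α)).isSome).image (hf.finMap ∘ ·) := by
  have hisSome (α : Fin r → Fin m) : (parkAssign n l ∅ (prefList (hf.finMap ∘ α))).isSome ↔
      (parkAssign m k ∅ (prefList α)).isSome := by
    rw [hf.parkAssign_prefList_finMap_comp, Option.isSome_map]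
  ext γ
  rw [Finset.mem_filter_univ, Finset.mem_image]
  simp only [Finset.mem_filter_univ, ← hf.mem_range_finMap]
  constructor
  · rintro ⟨hrange, hγ, -⟩
    choose α hα using hrange
    obtain rfl : hf.finMap ∘ α = γ := funext hα
    exact ⟨α, (hisSome α).1 hγ, rfl⟩
  · rintro ⟨α, hα, rfl⟩
    exact ⟨fun i => Set.mem_range_self (α i), (hisSome α).2 hα,
      hf.forall_mem_parkAssign_finMap_comp α⟩

end IsStreetEmbedding

/-- For `1 ≤ j ≤ d`, the `p`-th positive integer `j + (p - 1) * d` congruent to `j` modulo `d`.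
Subtracting last makes `classSpot d j 0 = 0`, so that `classSpot d j` is strictly monotone. -/
def classSpot (d j p : ℕ) : ℕ := p * d - (d - j)

theorem strictMono_classSpot {d j : ℕ} (hj : 1 ≤ j) (hjd : j ≤ d) :
    StrictMono (classSpot d j) := by
  refine strictMono_nat_of_lt_succ fun p => ?_
  rw [classSpot, classSpot, Nat.add_one_mul]
  omega

theorem classSpot_le_iff {d : ℕ} (hd : 0 < d) (n j p : ℕ) :
    classSpot d j p ≤ n ↔ p ≤ (n + (d - j)) / d := by
  rw [classSpot, Nat.sub_le_iff_le_add, Nat.le_div_iff_mul_le hd]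

theorem isStreetEmbedding_classSpot {d j : ℕ} (n k : ℕ) (hj : 1 ≤ j) (hjd : j ≤ d) :
    IsStreetEmbedding (classSpot d j) ((n + (d - j)) / d) k n (k * d) where
  strictMono := strictMono_classSpot hj hjd
  map_zero := by rw [classSpot, Nat.zero_mul, Nat.zero_sub]
  map_sub p := by rw [classSpot, classSpot, Nat.sub_mul, Nat.sub_right_comm]
  le_iff := classSpot_le_iff (hj.trans hjd) n j

theorem mod_eq_mod_iff_exists_classSpot_eq {d j s : ℕ} (hjd : j ≤ d) (hs : 0 < s) :
    s % d = j % d ↔ ∃ p, classSpot d j p = s := by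
  have hdvd : s % d = j % d ↔ d ∣ s + (d - j) := calc
    s % d = j % d ↔ j ≡ s + d [MOD d] := by rw [Nat.ModEq, Nat.add_mod_right, eq_comm]
    _ ↔ d ∣ s + (d - j) := by
      rw [Nat.modEq_iff_dvd' (Nat.le_add_left_of_le hjd), Nat.add_sub_assoc hjd]
  rw [hdvd, dvd_iff_exists_eq_mul_left]
  refine exists_congr fun p => ?_
  rw [classSpot]
  omega

theorem Ij_eq_image_classSpot {n d j : ℕ} (hj : 1 ≤ j) (hjd : j ≤ d) :
    Ij n d j = (Finset.Icc 1 ((n + (d - j)) / d)).image (classSpot d j) := by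
  have hf := isStreetEmbedding_classSpot n 1 hj hjd
  ext s
  rw [Ij, Finset.mem_filter, Finset.mem_image]
  constructor
  · rintro ⟨hs, hmod⟩
    obtain ⟨p, rfl⟩ :=
      (mod_eq_mod_iff_exists_classSpot_eq hjd (Finset.mem_Icc.1 hs).1).1 hmod
    exact ⟨p, hf.mem_Icc_iff.1 hs, rfl⟩
  · rintro ⟨p, hp, rfl⟩
    have hs := hf.mem_Icc_iff.2 hp
    exact ⟨hs, (mod_eq_mod_iff_exists_classSpot_eq hjd (Finset.mem_Icc.1 hs).1).2 ⟨p, rfl⟩⟩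

theorem card_Ij {n d j : ℕ} (hj : 1 ≤ j) (hjd : j ≤ d) :
    (Ij n d j).card = (n + (d - j)) / d := by
  rw [Ij_eq_image_classSpot hj hjd,
    Finset.card_image_of_injective _ (strictMono_classSpot hj hjd).injective,
    Nat.card_Icc, Nat.add_sub_cancel]

theorem card_park_in_Ij_general {d j m : ℕ} (n k r : ℕ) (hj : 1 ≤ j) (hjd : j ≤ d)
    (hm : m = (Ij n d j).card) :
    (Finset.univ.filter fun γ : Fin r → Fin n =>
        (∀ i, (γ i : ℕ) + 1 ∈ Ij n d j) ∧
          (parkAssign n (k * d) ∅ (prefList γ)).isSome ∧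
          ∀ s ∈ (parkAssign n (k * d) ∅ (prefList γ)).getD [], s ∈ Ij n d j).card =
      (Finset.univ.filter fun α : Fin r → Fin m =>
        (parkAssign m k ∅ (prefList α)).isSome).card := by
  obtain rfl : m = (n + (d - j)) / d := hm.trans (card_Ij hj hjd)
  have hf := isStreetEmbedding_classSpot n k hj hjd
  rw [Ij_eq_image_classSpot hj hjd, hf.filter_park_eq_image r,
    Finset.card_image_of_injective _ hf.finMap_injective.comp_left]

/-- For `1 ≤ j ≤ k ≤ n` and `m = |I_j|`, the number of tuples
`γ ∈ I_j^m` (encoded as `γ : Fin m → Fin n` with all 1-indexed preferences in `I_j`)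
such that under the `k`-vacillating rule on a street with spots `1,…,n` all `m` cars
park and every car parks in a spot of `I_j`, equals `|VPF_m|`. -/
theorem card_park_in_Ij (n k j : ℕ) (hk : 1 ≤ k) (hkn : k ≤ n)
    (hj : 1 ≤ j) (hjk : j ≤ k) (m : ℕ) (hm : m = (Ij n k j).card) :
    (Finset.univ.filter fun γ : Fin m → Fin n =>
        (∀ i : Fin m, ((γ i : ℕ) + 1) ∈ Ij n k j) ∧
          (parkAssign n k ∅ (prefList γ)).isSome ∧
          ∀ s ∈ (parkAssign n k ∅ (prefList γ)).getD [], s ∈ Ij n k j).card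
      = (VPF m).card := by
  simpa only [one_mul, VPF, VPFk] using card_park_in_Ij_general n 1 m hj hjk hm
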